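/- For all n ≥ 0 and all I, J ∈ P_n, the (I,J) entry of A_n equals (−1)^{|I ∩ J|} if for every run I_k of I the intersection I_k ∩ J is a prefix of I_k, and equals 0 otherwise. -/

import Mathlib

/-!
The prefix condition on runs is a local condition: all intersections of `J` with the runs of `I`
are prefixes exactly when, for consecutive `i, i + 1 ∈ I`, membership `i + 1 ∈ J` forces `i ∈ J`
(`forall_isPrefixOf_iff`). With this form, splitting off the top element of `[n]` is transparent:
passing from `n` to `n + 1` adds the single condition at `i = n`. When `n + 1` lies in both `I`
and `J`, that condition says `n ∈ I → n ∈ J`, and this is exactly the extra restriction on the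
support that distinguishes `B_n` from `A_n`. So the entries of `A_n` and `B_n` are computed
together by induction on `n` (`Amat_Bmat_entries`), the sign changing precisely when the top
element belongs to `I ∩ J`.
-/

open Finset

/-- Restriction of a subset of `Fin (n+1)` to `Fin n` (forgetting the top element). -/
def resSet {n : ℕ} (I : Finset (Fin (n + 1))) : Finset (Fin n) :=
  Finset.univ.filter (fun j : Fin n => Fin.castSucc j ∈ I)

mutual
  /-- The matrix `A_n`, rows/columns indexed by subsets of `{1,…,n}` (element `j`
  of `[n]` corresponds to `j-1 : Fin n`, i.e. anti-lexicographic/binary order). -/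
  def Amat : (n : ℕ) → Matrix (Finset (Fin n)) (Finset (Fin n)) ℤ
    | 0 => Matrix.of fun _ _ => 1
    | n + 1 => Matrix.of fun I J =>
        if Fin.last n ∈ I then
          if Fin.last n ∈ J then - Bmat n (resSet I) (resSet J)
          else Amat n (resSet I) (resSet J)
        else Amat n (resSet I) (resSet J)
  /-- The matrix `B_n`. -/
  def Bmat : (n : ℕ) → Matrix (Finset (Fin n)) (Finset (Fin n)) ℤ
    | 0 => Matrix.of fun _ _ => 1
    | n + 1 => Matrix.of fun I J =>
        if Fin.last n ∈ I then
          if Fin.last n ∈ J then - Bmat n (resSet I) (resSet J)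
          else 0
        else Amat n (resSet I) (resSet J)
end

/-- The Walsh-Hadamard matrix `H_n`. -/
def Hmat : (n : ℕ) → Matrix (Finset (Fin n)) (Finset (Fin n)) ℤ
  | 0 => Matrix.of fun _ _ => 1
  | n + 1 => Matrix.of fun I J =>
      if Fin.last n ∈ I ∧ Fin.last n ∈ J then - Hmat n (resSet I) (resSet J)
      else Hmat n (resSet I) (resSet J)

/-- The Möbius matrix `M_n` of the boolean lattice. -/
def Mobmat (n : ℕ) : Matrix (Finset (Fin n)) (Finset (Fin n)) ℤ :=
  Matrix.of fun I J => if I ⊆ J then (-1) ^ (J \ I).card else 0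

/-- The zeta matrix `Z_n` of the boolean lattice. -/
def Zetamat (n : ℕ) : Matrix (Finset (Fin n)) (Finset (Fin n)) ℤ :=
  Matrix.of fun I J => if I ⊆ J then 1 else 0

/-- The subset of `[n] = {1,…,n}` corresponding to a subset of `Fin n`. -/
def natSet {n : ℕ} (I : Finset (Fin n)) : Finset ℕ := Finset.image (fun j : Fin n => (j : ℕ) + 1) I

/-- The ordinal number of a subset in the anti-lexicographic order. -/
def ordFin {n : ℕ} (I : Finset (Fin n)) : ℕ := ∑ j ∈ I, 2 ^ (j : ℕ)

/-- The run (maximal interval of consecutive integers) of `I` containing `j`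
(empty if `j ∉ I`). -/
def runOf (I : Finset ℕ) (j : ℕ) : Finset ℕ :=
  I.filter (fun i => ∀ k ∈ Finset.Icc (min i j) (max i j), k ∈ I)

/-- The set of runs (maximal intervals of consecutive integers) of `I`. -/
def runsOf (I : Finset ℕ) : Finset (Finset ℕ) := I.image (runOf I)

/-- `P` is a prefix of the interval `R`: it consists of an initial segment of `R`. -/
def IsPrefixOf (P R : Finset ℕ) : Prop :=
  P ⊆ R ∧ ∀ i ∈ R, ∀ j ∈ P, i ≤ j → i ∈ P


/-- Local form of the prefix condition: membership in `J` propagates downwards along pairs of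
consecutive elements of `I`. -/
def DownClosedAlong (I J : Finset ℕ) : Prop :=
  ∀ i, i ∈ I → i + 1 ∈ I → i + 1 ∈ J → i ∈ J

theorem forall_isPrefixOf_iff (I J : Finset ℕ) :
    (∀ R ∈ runsOf I, IsPrefixOf (R ∩ J) R) ↔ DownClosedAlong I J := by
  constructor
  · intro h i hi hi1 hj
    have hR := (h (runOf I i) (mem_image_of_mem _ hi)).2 i ?_ (i + 1) ?_ (Nat.le_succ i)
    · exact (mem_inter.mp hR).2
    · simp only [runOf, mem_filter, mem_Icc]
      refine ⟨hi, fun k hk => ?_⟩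
      obtain rfl : k = i := by omega
      exact hi
    · simp only [runOf, mem_inter, mem_filter, mem_Icc]
      refine ⟨⟨hi1, fun k hk => ?_⟩, hj⟩
      obtain rfl | rfl : k = i ∨ k = i + 1 := by omega
      · exact hi
      · exact hi1
  · intro h R hR
    obtain ⟨a, -, rfl⟩ := mem_image.mp hR
    refine ⟨inter_subset_left, fun i hi j hj hij => mem_inter.mpr ⟨hi, ?_⟩⟩
    obtain ⟨hjR, hjJ⟩ := mem_inter.mp hj
    simp only [runOf, mem_filter, mem_Icc] at hi hjR
    -- `[i, j]` is covered by the intervals joining `i` and `j` to `a`, which lie in `I`.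
    have hI : ∀ k, i ≤ k → k ≤ j → k ∈ I := by
      intro k h1 h2
      rcases le_total k a with hka | hka
      · exact hi.2 k (by omega)
      · exact hjR.2 k (by omega)
    clear hi hjR hj hR
    induction j, hij using Nat.le_induction with
    | base => exact hjJ
    | succ j hij ih =>
      exact ih (h j (hI j hij (Nat.le_succ j)) (hI (j + 1) (by omega) le_rfl) hjJ)
        fun k h1 h2 => hI k h1 (by omega)

theorem mem_natSet_le {n : ℕ} {I : Finset (Fin n)} {m : ℕ} (h : m ∈ natSet I) :
    1 ≤ m ∧ m ≤ n := by
  simp only [natSet, mem_image] at h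
  obtain ⟨j, -, rfl⟩ := h
  have := j.isLt
  omega

theorem mem_natSet_succ {n : ℕ} (I : Finset (Fin (n + 1))) (m : ℕ) :
    m ∈ natSet I ↔ m ∈ natSet (resSet I) ∨ (m = n + 1 ∧ Fin.last n ∈ I) := by
  simp only [natSet, resSet, mem_image, mem_filter, mem_univ, true_and, Fin.exists_fin_succ',
    Fin.val_castSucc, Fin.val_last, eq_comm (a := m), and_comm (a := Fin.last n ∈ I)]

theorem top_mem_natSet {n : ℕ} (I : Finset (Fin (n + 1))) :
    n + 1 ∈ natSet I ↔ Fin.last n ∈ I := by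
  rw [mem_natSet_succ]
  constructor
  · rintro (h | h)
    · have := mem_natSet_le h
      omega
    · exact h.2
  · exact fun h => Or.inr ⟨rfl, h⟩

theorem card_inter_succ {n : ℕ} (I J : Finset (Fin (n + 1))) :
    (I ∩ J).card = (resSet I ∩ resSet J).card +
      if Fin.last n ∈ I ∧ Fin.last n ∈ J then 1 else 0 := by
  have h : ∀ {m : ℕ} (S : Finset (Fin m)), S.card = ∑ i, if i ∈ S then 1 else 0 := by
    intro m S
    simp
  rw [h (I ∩ J), h (resSet I ∩ resSet J), Fin.sum_univ_castSucc]
  simp [resSet]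

/-- Enlarging the ground set from `[n]` to `[n + 1]` adds only the local condition at `n`. -/
theorem downClosedAlong_succ {n : ℕ} (I J : Finset (Fin (n + 1))) :
    DownClosedAlong (natSet I) (natSet J) ↔
      DownClosedAlong (natSet (resSet I)) (natSet (resSet J)) ∧
        (Fin.last n ∈ I → Fin.last n ∈ J → n ∈ natSet (resSet I) → n ∈ natSet (resSet J)) := by
  have hI := mem_natSet_succ I
  have hJ := mem_natSet_succ J
  constructor
  · intro h
    refine ⟨fun i h1 h2 h3 => ?_, fun h1 h2 h3 => ?_⟩
    · have := h i ((hI _).2 (.inl h1)) ((hI _).2 (.inl h2)) ((hJ _).2 (.inl h3))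
      have hle := mem_natSet_le h2
      exact ((hJ _).1 this).resolve_right (by omega)
    · have := h n ((hI _).2 (.inl h3)) ((top_mem_natSet I).2 h1) ((top_mem_natSet J).2 h2)
      exact ((hJ _).1 this).resolve_right (by omega)
  · rintro ⟨h, htop⟩ i h1 h2 h3
    have hle := mem_natSet_le h2
    have h1' := ((hI _).1 h1).resolve_right (by omega)
    refine (hJ _).2 (.inl ?_)
    rcases (hI _).1 h2 with h2' | ⟨he, hl⟩
    · have hle' := mem_natSet_le h2'
      exact h i h1' h2' (((hJ _).1 h3).resolve_right (by omega))
    · obtain rfl : i = n := by omega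
      exact htop hl ((top_mem_natSet J).1 h3) h1'

open Classical in
/-- The entries of `A_n` and `B_n`; the support of `B_n` is cut out by the additional condition
that the top element `n`, if it lies in `I`, also lies in `J`. For `n = 0` that condition is
vacuous, since `0` belongs to no `natSet`. -/
theorem Amat_Bmat_entries (n : ℕ) : ∀ I J : Finset (Fin n),
    Amat n I J = (if DownClosedAlong (natSet I) (natSet J) then (-1) ^ (I ∩ J).card else 0) ∧
    Bmat n I J = (if DownClosedAlong (natSet I) (natSet J) ∧ (n ∈ natSet I → n ∈ natSet J)
      then (-1) ^ (I ∩ J).card else 0) := by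
  induction n with
  | zero =>
    intro I J
    have h0 : ∀ S : Finset (Fin 0), natSet S = ∅ := fun S => by
      simp [natSet, Subsingleton.elim S ∅]
    have hc : (I ∩ J).card = 0 := by simp [Subsingleton.elim I ∅]
    simp [Amat, Bmat, h0, hc, DownClosedAlong]
  | succ n ih =>
    intro I J
    obtain ⟨hA, hB⟩ := ih (resSet I) (resSet J)
    simp only [downClosedAlong_succ, top_mem_natSet, card_inter_succ]
    by_cases hI : Fin.last n ∈ I <;> by_cases hJ : Fin.last n ∈ J <;>
      simp [Amat, Bmat, hI, hJ, hA, hB, pow_succ, neg_ite]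

/-- Explicit formula for the entries of `A_n`: the `(I,J)` entry is
`(-1)^{|I ∩ J|}` if for every run `I_k` of `I` the intersection `I_k ∩ J` is a prefix
of `I_k`, and `0` otherwise. -/
theorem Amat_entries (n : ℕ) (I J : Finset (Fin n)) :
    ((∀ R ∈ runsOf (natSet I), IsPrefixOf (R ∩ natSet J) R) →
      Amat n I J = (-1) ^ (I ∩ J).card) ∧
    (¬ (∀ R ∈ runsOf (natSet I), IsPrefixOf (R ∩ natSet J) R) →
      Amat n I J = 0) := by
  rw [forall_isPrefixOf_iff, (Amat_Bmat_entries n I J).1]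
  exact ⟨fun h => if_pos h, fun h => if_neg h⟩
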